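/- Let 0 < μ < 1/2 and let u : ℝ → ℝ be smooth with compact support. Then ∫_ℝ (I₋^μ u)(x) · (I₊^μ u)(x) dx = cos(μπ) · ∫_ℝ |2πξ|^{−2μ} |û(ξ)|² dξ, where û is the Fourier transform of u. -/

import Mathlib

open MeasureTheory Real Set FourierTransform

/-- Left Riemann–Liouville fractional integral of order `μ` on the whole real line:
`(I₋^μ u)(x) = (1/Γ(μ)) ∫_{-∞}^x (x−s)^{μ−1} u(s) ds`. -/
noncomputable def leftRLIntegral (μ : ℝ) (u : ℝ → ℝ) (x : ℝ) : ℝ :=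
  (1 / Real.Gamma μ) * ∫ s in Set.Iio x, (x - s) ^ (μ - 1) * u s

/-- Right Riemann–Liouville fractional integral of order `μ` on the whole real line:
`(I₊^μ u)(x) = (1/Γ(μ)) ∫_x^∞ (s−x)^{μ−1} u(s) ds`. -/
noncomputable def rightRLIntegral (μ : ℝ) (u : ℝ → ℝ) (x : ℝ) : ℝ :=
  (1 / Real.Gamma μ) * ∫ s in Set.Ioi x, (s - x) ^ (μ - 1) * u s

/-!
The fractional integrals `I₋^μ` and `I₊^μ` are convolutions with the kernel
`k_μ(y) = y₊ ^ (μ - 1) / Γ(μ)` and with its reflection. As `k_μ ⋆ k_μ = k_{2μ}`, Fubini gives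
`∫ I₋^μ u · I₊^μ u = ∬ k_{2μ}(t - s) u(s) u(t) ds dt`; symmetrising in `s` and `t` turns the kernel
into `|t - s| ^ (2μ - 1) / (2 Γ(2μ))`, and what remains is a Riesz energy.

In dimension `d`, both `|x| ^ (a - d)` and `|ξ| ^ (-a)` are superpositions over `t > 0`, by Euler's
integral, of the Gaussians `exp (-π |x|² t)` and `exp (-π |ξ|² / t)`, which are Fourier transforms
of each other up to `t ^ (d / 2)`. Parseval for each Gaussian, integrated in `t`, therefore gives
`γ(d - a) ∬ |x - y| ^ (a - d) u(x) ū(y) = γ(a) ∫ |ξ| ^ (-a) |û(ξ)|²` with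
`γ(s) = π ^ (-s / 2) Γ(s / 2)`. For `d = 1` and `a = 2μ` the reflection and duplication formulas
for `Γ` reduce the constants to `cos (π μ)`.
-/

open ContinuousLinearMap Module
open scoped ComplexConjugate Convolution InnerProductSpace

lemma ae_fst_sub_snd_ne_zero {G : Type*} [AddCommGroup G] [MeasurableSpace G]
    [MeasurableAdd₂ G] [MeasurableNeg G] {m : Measure G} [SFinite m] [m.IsAddLeftInvariant]
    [NullSingletonClass m] : ∀ᵐ p ∂(m.prod m), p.1 - p.2 ≠ 0 :=
  (quasiMeasurePreserving_sub m m).ae (Measure.ae_ne m 0)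

section RiemannLiouville

/-- The Riemann–Liouville kernel `y₊ ^ (a - 1) / Γ(a)` on the real line. The left fractional
integral of order `a` is the convolution with `rlKernel a`, the right one the convolution with its
reflection. It is set to `0` at `y = 0`, whatever `a` is. -/
noncomputable def rlKernel (a : ℝ) : ℝ → ℝ :=
  (Ioi 0).indicator fun y => y ^ (a - 1) / Gamma a

variable {a b y : ℝ} {u v : ℝ → ℝ}

lemma rlKernel_of_pos (hy : 0 < y) : rlKernel a y = y ^ (a - 1) / Gamma a :=
  indicator_of_mem (mem_Ioi.2 hy) _

lemma rlKernel_of_nonpos (hy : y ≤ 0) : rlKernel a y = 0 :=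
  indicator_of_notMem (notMem_Ioi.2 hy) _

lemma rlKernel_nonneg (ha : 0 ≤ a) (y : ℝ) : 0 ≤ rlKernel a y :=
  indicator_nonneg
    (fun _ hz => div_nonneg (rpow_nonneg (le_of_lt hz) _) (Gamma_nonneg_of_nonneg ha)) y

@[fun_prop]
lemma measurable_rlKernel (a : ℝ) : Measurable (rlKernel a) :=
  (by fun_prop : Measurable fun y : ℝ => y ^ (a - 1) / Gamma a).indicator measurableSet_Ioi

lemma rlKernel_add_rlKernel_neg (hy : y ≠ 0) :
    rlKernel a y + rlKernel a (-y) = |y| ^ (a - 1) / Gamma a := by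
  rcases hy.lt_or_gt with h | h
  · rw [rlKernel_of_nonpos h.le, rlKernel_of_pos (neg_pos.2 h), abs_of_neg h, zero_add]
  · rw [rlKernel_of_pos h, rlKernel_of_nonpos (neg_nonpos.2 h.le), abs_of_pos h, add_zero]

lemma leftRLIntegral_eq_integral_rlKernel (a : ℝ) (u : ℝ → ℝ) (x : ℝ) :
    leftRLIntegral a u x = ∫ s, rlKernel a (x - s) * u s := by
  rw [leftRLIntegral, ← integral_const_mul, ← integral_indicator measurableSet_Iio]
  congr 1 with s
  by_cases h : s < x
  · rw [indicator_of_mem (mem_Iio.2 h), rlKernel_of_pos (sub_pos.2 h)]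
    ring
  · rw [indicator_of_notMem (notMem_Iio.2 (not_lt.1 h)),
      rlKernel_of_nonpos (sub_nonpos.2 (not_lt.1 h)), zero_mul]

lemma rightRLIntegral_eq_integral_rlKernel (a : ℝ) (u : ℝ → ℝ) (x : ℝ) :
    rightRLIntegral a u x = ∫ s, rlKernel a (s - x) * u s := by
  rw [rightRLIntegral, ← integral_const_mul, ← integral_indicator measurableSet_Ioi]
  congr 1 with s
  by_cases h : x < s
  · rw [indicator_of_mem (mem_Ioi.2 h), rlKernel_of_pos (sub_pos.2 h)]
    ring
  · rw [indicator_of_notMem (notMem_Ioi.2 (not_lt.1 h)),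
      rlKernel_of_nonpos (sub_nonpos.2 (not_lt.1 h)), zero_mul]

lemma integral_rpow_mul_sub_rpow (ha : 0 < a) (hb : 0 < b) (hy : 0 < y) :
    ∫ t in (0 : ℝ)..y, t ^ (a - 1) * (y - t) ^ (b - 1) =
      Gamma a * Gamma b / Gamma (a + b) * y ^ (a + b - 1) := by
  have hbeta := Complex.betaIntegral_scaled (a : ℂ) b hy
  rw [Complex.betaIntegral_eq_Gamma_mul_div _ _ (by simpa) (by simpa)] at hbeta
  rw [← Complex.ofReal_inj, ← intervalIntegral.integral_ofReal]
  push_cast [Complex.ofReal_cpow hy.le, ← Complex.Gamma_ofReal]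
  rw [mul_comm, ← hbeta]
  refine intervalIntegral.integral_congr fun t ht => ?_
  rw [uIcc_of_le hy.le] at ht
  push_cast [Complex.ofReal_cpow ht.1, Complex.ofReal_cpow (sub_nonneg.2 ht.2)]
  rfl

lemma rlKernel_convolution_rlKernel (ha : 0 < a) (hb : 0 < b) :
    rlKernel a ⋆[mul ℝ ℝ] rlKernel b = rlKernel (a + b) := by
  unfold rlKernel
  rw [← posConvolution_eq_convolution_indicator _ _ (mul ℝ ℝ) volume, posConvolution]
  refine indicator_congr fun y (hy : 0 < y) => ?_
  have hΓa := (Gamma_pos_of_pos ha).ne'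
  have hΓb := (Gamma_pos_of_pos hb).ne'
  simp only [mul_apply', div_mul_div_comm]
  rw [intervalIntegral.integral_div, integral_rpow_mul_sub_rpow ha hb hy]
  field_simp

lemma convolutionExists_rlKernel (ha : 0 < a) (hb : 0 < b) :
    ConvolutionExists (rlKernel a) (rlKernel b) (mul ℝ ℝ) := by
  intro y
  rcases le_or_gt y 0 with hy | hy
  · refine (integrable_zero ℝ ℝ volume).congr (.of_forall fun t => ?_)
    rcases le_or_gt t 0 with ht | ht
    · simp [rlKernel_of_nonpos ht]
    · simp [rlKernel_of_nonpos (show y - t ≤ 0 by linarith)]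
  · refine .of_integral_ne_zero ?_
    rw [← convolution_def, rlKernel_convolution_rlKernel ha hb, rlKernel_of_pos hy]
    have := Gamma_pos_of_pos (add_pos ha hb)
    positivity

lemma integrable_rlKernel_sub_mul_rlKernel_sub (ha : 0 < a) (hb : 0 < b) (s t : ℝ) :
    Integrable fun x => rlKernel a (x - s) * rlKernel b (t - x) := by
  simpa only [mul_apply', sub_sub_sub_cancel_right] using
    (convolutionExists_rlKernel ha hb (t - s)).integrable.comp_sub_right s

lemma integral_rlKernel_sub_mul_rlKernel_sub (ha : 0 < a) (hb : 0 < b) (s t : ℝ) :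
    ∫ x, rlKernel a (x - s) * rlKernel b (t - x) = rlKernel (a + b) (t - s) := by
  rw [← rlKernel_convolution_rlKernel ha hb, convolution_def,
    ← integral_sub_right_eq_self (fun x => mul ℝ ℝ (rlKernel a x) (rlKernel b (t - s - x))) s]
  simp only [mul_apply', sub_sub_sub_cancel_right]

theorem integral_leftRLIntegral_mul_rightRLIntegral (ha : 0 < a) (hb : 0 < b)
    (hu : AEStronglyMeasurable u) (hv : AEStronglyMeasurable v)
    (huv : Integrable fun p : ℝ × ℝ => rlKernel (a + b) (p.2 - p.1) * (u p.1 * v p.2)) :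
    ∫ x, leftRLIntegral a u x * rightRLIntegral b v x =
      ∫ p : ℝ × ℝ, rlKernel (a + b) (p.2 - p.1) * (u p.1 * v p.2) := by
  let F (p : ℝ × ℝ) (x : ℝ) : ℝ :=
    rlKernel a (x - p.1) * rlKernel b (p.2 - x) * (u p.1 * v p.2)
  have hF_norm (p : ℝ × ℝ) :
      ∫ x, ‖F p x‖ = ‖rlKernel (a + b) (p.2 - p.1) * (u p.1 * v p.2)‖ := by
    have hk {c : ℝ} (hc : 0 < c) (y : ℝ) : ‖rlKernel c y‖ = rlKernel c y :=
      norm_of_nonneg (rlKernel_nonneg hc.le y)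
    simp only [F, norm_mul, hk ha, hk hb, hk (add_pos ha hb)]
    rw [integral_mul_const, integral_rlKernel_sub_mul_rlKernel_sub ha hb]
  have hF_meas : AEStronglyMeasurable (Function.uncurry F) (volume.prod volume) :=
    (by fun_prop : Measurable fun q : (ℝ × ℝ) × ℝ =>
      rlKernel a (q.2 - q.1.1) * rlKernel b (q.1.2 - q.2)).aestronglyMeasurable.mul
      (hu.comp_fst.mul hv.comp_snd).comp_fst
  have hF_int : Integrable (Function.uncurry F) (volume.prod volume) := by
    refine (integrable_prod_iff hF_meas).2 ⟨.of_forall fun p =>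
      (integrable_rlKernel_sub_mul_rlKernel_sub ha hb p.1 p.2).mul_const (u p.1 * v p.2), ?_⟩
    simpa only [Function.uncurry_apply_pair, hF_norm] using huv.norm
  calc ∫ x, leftRLIntegral a u x * rightRLIntegral b v x
      = ∫ x, ∫ p, F p x := by
        congr 1 with x
        rw [leftRLIntegral_eq_integral_rlKernel, rightRLIntegral_eq_integral_rlKernel,
          ← integral_prod_mul, ← Measure.volume_eq_prod]
        simp only [F, mul_mul_mul_comm]
    _ = ∫ p, ∫ x, F p x := (integral_integral_swap hF_int).symm
    _ = ∫ p : ℝ × ℝ, rlKernel (a + b) (p.2 - p.1) * (u p.1 * v p.2) := by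
        simp only [F, integral_mul_const, integral_rlKernel_sub_mul_rlKernel_sub ha hb]

lemma integrable_rlKernel_sub_mul (hu : AEStronglyMeasurable u)
    (hE : Integrable fun p : ℝ × ℝ => |p.1 - p.2| ^ (a - 1) * (u p.1 * u p.2)) :
    Integrable fun p : ℝ × ℝ => rlKernel a (p.2 - p.1) * (u p.1 * u p.2) := by
  have hmeas : AEStronglyMeasurable
      (fun p : ℝ × ℝ => rlKernel a (p.2 - p.1) * (u p.1 * u p.2)) (volume.prod volume) :=
    (by fun_prop : Measurable fun p : ℝ × ℝ => rlKernel a (p.2 - p.1)).aestronglyMeasurable.mul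
      (hu.comp_fst.mul hu.comp_snd)
  refine (hE.const_mul (Gamma a)⁻¹).mono hmeas (.of_forall fun p => ?_)
  rcases le_or_gt (p.2 - p.1) 0 with h | h
  · rw [rlKernel_of_nonpos h, zero_mul, norm_zero]
    exact norm_nonneg _
  · rw [rlKernel_of_pos h, abs_sub_comm, abs_of_pos h]
    apply le_of_eq
    congr 1
    ring

lemma integral_rlKernel_sub_mul (hu : AEStronglyMeasurable u)
    (hE : Integrable fun p : ℝ × ℝ => |p.1 - p.2| ^ (a - 1) * (u p.1 * u p.2)) :
    ∫ p : ℝ × ℝ, rlKernel a (p.2 - p.1) * (u p.1 * u p.2) =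
      (∫ p : ℝ × ℝ, |p.1 - p.2| ^ (a - 1) * (u p.1 * u p.2)) / (2 * Gamma a) := by
  let f (p : ℝ × ℝ) : ℝ := rlKernel a (p.2 - p.1) * (u p.1 * u p.2)
  have hf : Integrable f := integrable_rlKernel_sub_mul hu hE
  rw [mul_comm 2, ← div_div, eq_div_iff two_ne_zero, mul_two, ← integral_div]
  calc (∫ p, f p) + ∫ p, f p = (∫ p : ℝ × ℝ, f p.swap) + ∫ p, f p := by
        congr 1
        exact (integral_prod_swap f).symm
    _ = ∫ p : ℝ × ℝ, (f p.swap + f p) := (integral_add hf.swap hf).symm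
    _ = ∫ p : ℝ × ℝ, |p.1 - p.2| ^ (a - 1) * (u p.1 * u p.2) / Gamma a := by
        refine integral_congr_ae ?_
        filter_upwards [ae_fst_sub_snd_ne_zero] with p hp
        have h := rlKernel_add_rlKernel_neg (a := a) hp
        rw [neg_sub] at h
        simp only [f, Prod.fst_swap, Prod.snd_swap]
        linear_combination (u p.1 * u p.2) * h

end RiemannLiouville

section GammaFactor

/-- Deligne's archimedean Gamma factor `π ^ (-s / 2) Γ(s / 2)` as a function of a real variable:
the real-valued counterpart of `Complex.Gammaℝ`. -/
noncomputable def gammaR (s : ℝ) : ℝ := π ^ (-s / 2) * Gamma (s / 2)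

variable {a r s : ℝ}

lemma ofReal_gammaR (s : ℝ) : (gammaR s : ℂ) = Complex.Gammaℝ s := by
  rw [Complex.Gammaℝ_def, gammaR]
  push_cast [Complex.ofReal_cpow pi_pos.le, ← Complex.Gamma_ofReal]
  rfl

lemma gammaR_pos (hs : 0 < s) : 0 < gammaR s :=
  mul_pos (rpow_pos_of_pos pi_pos _) (Gamma_pos_of_pos (half_pos hs))

lemma gammaR_div_gammaR_one_sub (ha : 0 < a) :
    gammaR a / gammaR (1 - a) = 2 * (2 * π) ^ (-a) * Gamma a * cos (a / 2 * π) := by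
  have ha' (n : ℕ) : (a : ℂ) ≠ -(2 * n + 1) := by
    norm_cast
    have : (0 : ℝ) ≤ n := n.cast_nonneg
    push_cast
    linarith
  have h := Complex.Gammaℝ_div_Gammaℝ_one_sub ha'
  rw [Complex.Gammaℂ_def] at h
  rw [← Complex.ofReal_inj]
  push_cast [ofReal_gammaR, Complex.ofReal_cpow two_pi_pos.le, ← Complex.Gamma_ofReal]
  rw [h]
  ring_nf

lemma integral_rpow_mul_exp_neg_pi_mul_sq_mul (hs : 0 < s) (hr : 0 < r) :
    ∫ t in Ioi (0 : ℝ), t ^ (s / 2 - 1) * rexp (-π * r ^ 2 * t) = gammaR s * r ^ (-s) := by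
  simp only [neg_mul]
  rw [integral_rpow_mul_exp_neg_mul_Ioi (half_pos hs) (by positivity), gammaR, one_div,
    mul_inv, mul_rpow (by positivity) (by positivity), inv_rpow pi_pos.le, ← rpow_neg pi_pos.le,
    inv_rpow (sq_nonneg r), ← rpow_neg (sq_nonneg r), ← rpow_natCast r 2, ← rpow_mul hr.le]
  push_cast
  ring_nf

lemma integral_rpow_mul_exp_neg_pi_mul_sq_div (hs : 0 < s) (hr : 0 < r) :
    ∫ t in Ioi (0 : ℝ), t ^ (-s / 2 - 1) * rexp (-π * r ^ 2 / t) = gammaR s * r ^ (-s) := by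
  rw [← integral_rpow_mul_exp_neg_pi_mul_sq_mul hs hr,
    ← integral_comp_rpow_Ioi _ (neg_ne_zero.2 one_ne_zero)]
  refine setIntegral_congr_fun measurableSet_Ioi fun t (ht : 0 < t) => ?_
  simp only [smul_eq_mul, abs_neg, abs_one, one_mul]
  rw [← rpow_mul ht.le, ← mul_assoc, ← rpow_add ht, rpow_neg_one, div_eq_mul_inv _ t⁻¹, inv_inv]
  ring_nf

end GammaFactor

section Integrability

variable {𝕜 : Type*} [RCLike 𝕜]

section Group

variable {G : Type*} [AddCommGroup G] [MeasurableSpace G] [MeasurableAdd₂ G] [MeasurableNeg G]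
  {m : Measure G} [SFinite m] [m.IsAddLeftInvariant] {k : G → ℝ} {f g : G → 𝕜}

lemma integrable_kernel_sub_smul_of_memLp_two [m.IsNegInvariant] (hk : Integrable k m)
    (hf : MemLp f 2 m) (hg : MemLp g 2 m) :
    Integrable (fun p : G × G => k (p.1 - p.2) • (f p.1 * g p.2)) (m.prod m) := by
  have hfst : Integrable (fun p : G × G => ‖f p.1‖ ^ 2 * k (p.1 - p.2)) (m.prod m) := by
    simpa [Function.comp_def] using
      ((hf.integrable_norm_pow two_ne_zero).convolution_integrand (mul ℝ ℝ) hk.comp_neg).swap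
  have hsnd : Integrable (fun p : G × G => ‖g p.2‖ ^ 2 * k (p.1 - p.2)) (m.prod m) :=
    (hg.integrable_norm_pow two_ne_zero).convolution_integrand (mul ℝ ℝ) hk
  refine (hfst.norm.add hsnd.norm).mono' ?_ (.of_forall fun p => ?_)
  · exact (hk.1.comp_quasiMeasurePreserving (quasiMeasurePreserving_sub m m)).smul
      (hf.1.comp_fst.mul hg.1.comp_snd)
  · simp only [Pi.add_apply, norm_mul, norm_smul, norm_pow, norm_norm]
    have hfg : ‖f p.1‖ * ‖g p.2‖ ≤ ‖f p.1‖ ^ 2 + ‖g p.2‖ ^ 2 := by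
      linarith [two_mul_le_add_sq ‖f p.1‖ ‖g p.2‖, sq_nonneg ‖f p.1‖, sq_nonneg ‖g p.2‖,
        mul_nonneg (norm_nonneg (f p.1)) (norm_nonneg (g p.2))]
    rw [← add_mul, mul_comm]
    gcongr

lemma integrable_kernel_sub_smul_of_bounded {C : ℝ} (hk : AEStronglyMeasurable k m)
    (hkC : ∀ x, ‖k x‖ ≤ C) (hf : Integrable f m) (hg : Integrable g m) :
    Integrable (fun p : G × G => k (p.1 - p.2) • (f p.1 * g p.2)) (m.prod m) :=
  (hf.mul_prod hg).bdd_smul C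
    (hk.comp_quasiMeasurePreserving (quasiMeasurePreserving_sub m m)) (.of_forall fun _ => hkC _)

end Group

variable {V : Type*} [NormedAddCommGroup V] [InnerProductSpace ℝ V] [FiniteDimensional ℝ V]
  [MeasurableSpace V] [BorelSpace V] {a : ℝ} {u v : V → 𝕜}

lemma integrableOn_norm_rpow_sub_finrank_ball [Nontrivial V] (ha : 0 < a) :
    IntegrableOn (fun x : V => ‖x‖ ^ (a - finrank ℝ V)) (Metric.ball 0 1) := by
  rw [integrableOn_fun_norm_addHaar volume (f := fun y => y ^ (a - finrank ℝ V))]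
  refine ((intervalIntegral.integrableOn_Ioo_rpow_iff one_pos).2
    (show -1 < a - 1 by linarith)).congr_fun (fun y hy => ?_) measurableSet_Ioo
  have hdim : 1 ≤ finrank ℝ V := Module.finrank_pos
  rw [smul_eq_mul, ← rpow_natCast, ← rpow_add hy.1, Nat.cast_sub hdim]
  push_cast
  ring_nf

theorem integrable_norm_sub_rpow_smul [Nontrivial V] (ha0 : 0 < a) (ha : a ≤ finrank ℝ V)
    (hu : Integrable u) (hu2 : MemLp u 2) (hv : Integrable v) (hv2 : MemLp v 2) :
    Integrable fun p : V × V => ‖p.1 - p.2‖ ^ (a - finrank ℝ V) • (u p.1 * v p.2) := by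
  let k (x : V) : ℝ := ‖x‖ ^ (a - finrank ℝ V)
  have hk : Measurable k := by fun_prop
  have hfar_le (x : V) : ‖(Metric.ball 0 1)ᶜ.indicator k x‖ ≤ 1 := by
    by_cases hx : x ∈ Metric.ball 0 1
    · rw [indicator_of_notMem (notMem_compl_iff.2 hx), norm_zero]
      exact zero_le_one
    · rw [indicator_of_mem (mem_compl hx), norm_of_nonneg (by positivity)]
      rw [mem_ball_zero_iff, not_lt] at hx
      exact rpow_le_one_of_one_le_of_nonpos hx (sub_nonpos.2 ha)
  have hnear := integrable_kernel_sub_smul_of_memLp_two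
    ((integrable_indicator_iff measurableSet_ball).2
      (integrableOn_norm_rpow_sub_finrank_ball ha0)) hu2 hv2
  have hfar := integrable_kernel_sub_smul_of_bounded
    (hk.indicator measurableSet_ball.compl).aestronglyMeasurable hfar_le hu hv
  refine (hnear.add hfar).congr (.of_forall fun p => ?_)
  simp only [Pi.add_apply, ← add_smul]
  congr 1
  exact congrFun (indicator_self_add_compl (Metric.ball 0 1) k) (p.1 - p.2)

end Integrability

section Fourier

variable {V : Type*} [NormedAddCommGroup V] [InnerProductSpace ℝ V] [FiniteDimensional ℝ V]
  [MeasurableSpace V] [BorelSpace V] {a t : ℝ} {u v G : V → ℂ}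

theorem integral_fourier_sub_mul_mul_conj (hG : Integrable G) (hu : Integrable u)
    (hv : Integrable v) :
    ∫ p : V × V, 𝓕 G (p.1 - p.2) * (u p.1 * conj (v p.2)) =
      ∫ ξ, G ξ * (𝓕 u ξ * conj (𝓕 v ξ)) := by
  let φ (p : V × V) (ξ : V) : ℂ :=
    (𝐞 (-⟪ξ, p.1 - p.2⟫_ℝ) : ℂ) * (u p.1 * conj (v p.2) * G ξ)
  have hφ : Integrable (Function.uncurry φ) (volume.prod volume) := by
    have hv' : Integrable fun y => conj (v y) :=
      Complex.conjLIE.toContinuousLinearMap.integrable_comp hv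
    refine ((hu.mul_prod hv').mul_prod hG).bdd_mul (c := 1)
      (f := fun q : (V × V) × V => (𝐞 (-⟪q.2, q.1.1 - q.1.2⟫_ℝ) : ℂ))
      (Continuous.aestronglyMeasurable (by fun_prop)) (.of_forall fun q => ?_)
    exact (Circle.norm_coe _).le
  have hφ_p (p : V × V) : ∫ ξ, φ p ξ = 𝓕 G (p.1 - p.2) * (u p.1 * conj (v p.2)) := by
    rw [Real.fourier_eq, ← integral_mul_const]
    congr 1 with ξ
    simp only [φ, Circle.smul_def, smul_eq_mul]
    ring
  have hφ_ξ (ξ : V) : ∫ p, φ p ξ = G ξ * (𝓕 u ξ * conj (𝓕 v ξ)) := by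
    rw [Real.fourier_eq, Real.fourier_eq, ← integral_conj, ← integral_prod_mul,
      ← integral_const_mul, ← Measure.volume_eq_prod]
    congr 1 with p
    have hphase : (𝐞 (-⟪ξ, p.1 - p.2⟫_ℝ) : ℂ) = 𝐞 (-⟪p.1, ξ⟫_ℝ) * conj (𝐞 (-⟪p.2, ξ⟫_ℝ) : ℂ) := by
      rw [← Circle.coe_inv_eq_conj, ← AddChar.map_neg_eq_inv, ← Circle.coe_mul,
        ← AddChar.map_add_eq_mul, inner_sub_right, real_inner_comm ξ, real_inner_comm ξ]
      ring_nf
    simp only [φ, hphase, Circle.smul_def, smul_eq_mul, map_mul]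
    ring
  simp only [← hφ_p, ← hφ_ξ]
  exact integral_integral_swap hφ

lemma integrable_exp_neg_pi_mul_norm_sq_div (ht : 0 < t) :
    Integrable fun ξ : V => rexp (-π * ‖ξ‖ ^ 2 / t) := by
  have hb : 0 < ((π / t : ℝ) : ℂ).re := div_pos pi_pos ht
  have h := (GaussianFourier.integrable_cexp_neg_mul_sq_norm_add hb 0 (0 : V)).norm
  refine h.congr (.of_forall fun ξ => ?_)
  simp only [zero_mul, add_zero, Complex.norm_exp, ← Complex.ofReal_pow,
    ← Complex.ofReal_neg, ← Complex.ofReal_mul, Complex.ofReal_re]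
  ring_nf

lemma fourier_exp_neg_pi_mul_norm_sq_div (ht : 0 < t) (w : V) :
    𝓕 (fun ξ : V => (rexp (-π * ‖ξ‖ ^ 2 / t) : ℂ)) w =
      (t ^ (finrank ℝ V / 2 : ℝ) * rexp (-π * ‖w‖ ^ 2 * t) : ℝ) := by
  have hb : 0 < ((π / t : ℝ) : ℂ).re := div_pos pi_pos ht
  have ht' : (t : ℂ) ≠ 0 := Complex.ofReal_ne_zero.2 ht.ne'
  have hπ : (π : ℂ) ≠ 0 := Complex.ofReal_ne_zero.2 pi_ne_zero
  convert fourier_gaussian_innerProductSpace hb w using 1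
  · refine congrArg (fun f : V → ℂ => 𝓕 f w) (funext fun ξ => ?_)
    push_cast
    ring_nf
  · push_cast [Complex.ofReal_cpow ht.le]
    rw [div_div_cancel₀ hπ]
    congr 2
    field_simp

theorem integral_exp_neg_pi_mul_norm_sub_sq_mul (ht : 0 < t) (hu : Integrable u) :
    ∫ p : V × V, (t ^ (finrank ℝ V / 2 : ℝ) * rexp (-π * ‖p.1 - p.2‖ ^ 2 * t)) •
        (u p.1 * conj (u p.2)) =
      ∫ ξ, rexp (-π * ‖ξ‖ ^ 2 / t) * ‖𝓕 u ξ‖ ^ 2 := by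
  have hG : Integrable fun ξ : V => (rexp (-π * ‖ξ‖ ^ 2 / t) : ℂ) :=
    (integrable_exp_neg_pi_mul_norm_sq_div ht).ofReal
  have h := integral_fourier_sub_mul_mul_conj hG hu hu
  simp only [fourier_exp_neg_pi_mul_norm_sq_div ht, Complex.mul_conj', ← Complex.real_smul] at h
  rw [h, ← integral_complex_ofReal]
  push_cast [Complex.real_smul]
  rfl

end Fourier

section RieszEnergy

variable {a r s t : ℝ}

lemma integrableOn_rpow_mul_exp_neg_pi_mul_sq_mul (hs : 0 < s) (hr : 0 < r) :
    IntegrableOn (fun t : ℝ => t ^ (s / 2 - 1) * rexp (-π * r ^ 2 * t)) (Ioi 0) := by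
  refine .of_integral_ne_zero ?_
  rw [integral_rpow_mul_exp_neg_pi_mul_sq_mul hs hr]
  exact (mul_pos (gammaR_pos hs) (rpow_pos_of_pos hr _)).ne'

lemma integrable_rpow_mul_exp_neg_pi_mul_sq_mul_smul {X E : Type*} [MeasurableSpace X]
    [NormedAddCommGroup E] [NormedSpace ℝ E] {m : Measure X} {ρ : X → ℝ} {U : X → E}
    (hs : 0 < s) (hρ : Measurable ρ) (hρ_pos : ∀ᵐ x ∂m, 0 < ρ x) (hU : AEStronglyMeasurable U m)
    (hρU : Integrable (fun x => ρ x ^ (-s) • U x) m) :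
    Integrable (fun q : X × ℝ => (q.2 ^ (s / 2 - 1) * rexp (-π * ρ q.1 ^ 2 * q.2)) • U q.1)
      (m.prod (volume.restrict (Ioi 0))) := by
  have hmeas : AEStronglyMeasurable
      (fun q : X × ℝ => (q.2 ^ (s / 2 - 1) * rexp (-π * ρ q.1 ^ 2 * q.2)) • U q.1)
      (m.prod (volume.restrict (Ioi 0))) :=
    (by fun_prop : Measurable fun q : X × ℝ =>
      q.2 ^ (s / 2 - 1) * rexp (-π * ρ q.1 ^ 2 * q.2)).aestronglyMeasurable.smul hU.comp_fst
  refine (integrable_prod_iff hmeas).2 ⟨?_, (hρU.norm.const_mul (gammaR s)).congr ?_⟩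
  · filter_upwards [hρ_pos] with x hx
    exact (integrableOn_rpow_mul_exp_neg_pi_mul_sq_mul hs hx).smul_const (U x)
  · filter_upwards [hρ_pos] with x hx
    rw [norm_smul, norm_of_nonneg (rpow_nonneg hx.le _), ← mul_assoc,
      ← integral_rpow_mul_exp_neg_pi_mul_sq_mul hs hx, ← integral_mul_const]
    refine setIntegral_congr_fun measurableSet_Ioi fun t (ht : 0 < t) => ?_
    rw [norm_smul, norm_of_nonneg (by positivity)]

variable {V : Type*} [NormedAddCommGroup V] [InnerProductSpace ℝ V] [FiniteDimensional ℝ V]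
  [MeasurableSpace V] [BorelSpace V] {u : V → ℂ}

lemma continuous_fourier {E : Type*} [NormedAddCommGroup E] [NormedSpace ℂ E] {f : V → E}
    (hf : Integrable f) : Continuous (𝓕 f) :=
  VectorFourier.fourierIntegral_continuous continuous_fourierChar continuous_inner hf

lemma integral_rpow_mul_exp_neg_pi_mul_norm_sub_sq_mul_smul (a : ℝ) (ht : 0 < t)
    (hu : Integrable u) :
    ∫ p : V × V, (t ^ ((finrank ℝ V - a) / 2 - 1) * rexp (-π * ‖p.1 - p.2‖ ^ 2 * t)) •
        (u p.1 * conj (u p.2)) =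
      ∫ ξ, t ^ (-a / 2 - 1) * rexp (-π * ‖ξ‖ ^ 2 / t) * ‖𝓕 u ξ‖ ^ 2 := by
  have hpow : t ^ ((finrank ℝ V - a) / 2 - 1) = t ^ (-a / 2 - 1) * t ^ (finrank ℝ V / 2 : ℝ) := by
    rw [← rpow_add ht]
    ring_nf
  simp only [hpow, mul_assoc (t ^ (-a / 2 - 1)), mul_smul (t ^ (-a / 2 - 1))]
  rw [integral_smul, integral_const_mul, integral_exp_neg_pi_mul_norm_sub_sq_mul ht hu,
    Complex.real_smul, Complex.ofReal_mul]

lemma integrable_rpow_mul_exp_neg_pi_mul_norm_sub_sq_mul_smul [Nontrivial V]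
    (ha : a < finrank ℝ V) (hu : AEStronglyMeasurable u)
    (hE : Integrable fun p : V × V =>
      ‖p.1 - p.2‖ ^ (a - finrank ℝ V) • (u p.1 * conj (u p.2))) :
    Integrable (fun q : (V × V) × ℝ => (q.2 ^ ((finrank ℝ V - a) / 2 - 1) *
      rexp (-π * ‖q.1.1 - q.1.2‖ ^ 2 * q.2)) • (u q.1.1 * conj (u q.1.2)))
      (volume.prod (volume.restrict (Ioi 0))) := by
  have hpos : ∀ᵐ p : V × V, 0 < ‖p.1 - p.2‖ := by
    filter_upwards [ae_fst_sub_snd_ne_zero] with p hp using norm_pos_iff.2 hp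
  have hmeas : AEStronglyMeasurable fun p : V × V => u p.1 * conj (u p.2) :=
    hu.comp_fst.mul (Complex.continuous_conj.comp_aestronglyMeasurable hu.comp_snd)
  rw [← neg_sub (finrank ℝ V : ℝ) a] at hE
  exact integrable_rpow_mul_exp_neg_pi_mul_sq_mul_smul (m := volume)
    (ρ := fun p : V × V => ‖p.1 - p.2‖) (U := fun p => u p.1 * conj (u p.2))
    (sub_pos.2 ha) (by fun_prop) hpos hmeas hE

-- The integrand is nonnegative, so on each slice its norm integrates to its integral, which
-- Parseval moves to the kernel side, where finiteness of the energy makes it integrable in `t`.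
lemma integrable_rpow_mul_exp_neg_pi_mul_norm_sq_div_mul [Nontrivial V] (ha : a < finrank ℝ V)
    (hu : Integrable u)
    (hE : Integrable fun p : V × V =>
      ‖p.1 - p.2‖ ^ (a - finrank ℝ V) • (u p.1 * conj (u p.2))) :
    Integrable (fun q : V × ℝ =>
      q.2 ^ (-a / 2 - 1) * rexp (-π * ‖q.1‖ ^ 2 / q.2) * ‖𝓕 u q.1‖ ^ 2)
      (volume.prod (volume.restrict (Ioi 0))) := by
  have hcont := continuous_fourier hu
  have hmeas : Measurable fun q : V × ℝ =>
      q.2 ^ (-a / 2 - 1) * rexp (-π * ‖q.1‖ ^ 2 / q.2) * ‖𝓕 u q.1‖ ^ 2 := by fun_prop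
  have hK := integrable_rpow_mul_exp_neg_pi_mul_norm_sub_sq_mul_smul ha hu.1 hE
  refine (integrable_prod_iff' hmeas.aestronglyMeasurable).2
    ⟨?_, hK.integral_prod_right.re.congr ?_⟩
  · filter_upwards [ae_restrict_mem measurableSet_Ioi] with t (ht : 0 < t)
    refine ((integrable_exp_neg_pi_mul_norm_sq_div ht).const_mul _).mul_bdd
      (c := (∫ x, ‖u x‖) ^ 2) (by fun_prop) (.of_forall fun ξ => ?_)
    rw [norm_pow, norm_norm]
    gcongr
    exact VectorFourier.norm_fourierIntegral_le_integral_norm ..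
  · filter_upwards [ae_restrict_mem measurableSet_Ioi] with t (ht : 0 < t)
    rw [integral_rpow_mul_exp_neg_pi_mul_norm_sub_sq_mul_smul a ht hu, RCLike.re_eq_complex_re,
      Complex.ofReal_re]
    congr 1 with ξ
    exact (norm_of_nonneg (by positivity)).symm

theorem gammaR_smul_integral_norm_sub_rpow_smul (ha0 : 0 < a) (ha : a < finrank ℝ V)
    (hu : Integrable u)
    (hE : Integrable fun p : V × V =>
      ‖p.1 - p.2‖ ^ (a - finrank ℝ V) • (u p.1 * conj (u p.2))) :
    gammaR (finrank ℝ V - a) •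
        ∫ p : V × V, ‖p.1 - p.2‖ ^ (a - finrank ℝ V) • (u p.1 * conj (u p.2)) =
      (gammaR a * ∫ ξ, ‖ξ‖ ^ (-a) * ‖𝓕 u ξ‖ ^ 2 : ℝ) := by
  have : Nontrivial V := nontrivial_of_finrank_pos (R := ℝ) (by exact_mod_cast ha0.trans ha)
  let K (p : V × V) (t : ℝ) : ℂ := (t ^ ((finrank ℝ V - a) / 2 - 1) *
    rexp (-π * ‖p.1 - p.2‖ ^ 2 * t)) • (u p.1 * conj (u p.2))
  let L (ξ : V) (t : ℝ) : ℝ := t ^ (-a / 2 - 1) * rexp (-π * ‖ξ‖ ^ 2 / t) * ‖𝓕 u ξ‖ ^ 2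
  have hK : Integrable (Function.uncurry K) (volume.prod (volume.restrict (Ioi 0))) :=
    integrable_rpow_mul_exp_neg_pi_mul_norm_sub_sq_mul_smul ha hu.1 hE
  have hL : Integrable (Function.uncurry L) (volume.prod (volume.restrict (Ioi 0))) :=
    integrable_rpow_mul_exp_neg_pi_mul_norm_sq_div_mul ha hu hE
  calc gammaR (finrank ℝ V - a) •
        ∫ p : V × V, ‖p.1 - p.2‖ ^ (a - finrank ℝ V) • (u p.1 * conj (u p.2))
      = ∫ p, ∫ t in Ioi 0, K p t := by
        rw [← integral_smul]
        refine integral_congr_ae ?_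
        filter_upwards [ae_fst_sub_snd_ne_zero] with p hp
        rw [integral_smul_const, integral_rpow_mul_exp_neg_pi_mul_sq_mul (sub_pos.2 ha)
          (norm_pos_iff.2 hp), neg_sub, mul_smul]
    _ = ∫ t in Ioi 0, ∫ p, K p t := integral_integral_swap hK
    _ = ∫ t in Ioi 0, ((∫ ξ, L ξ t : ℝ) : ℂ) :=
        setIntegral_congr_fun measurableSet_Ioi fun t ht =>
          integral_rpow_mul_exp_neg_pi_mul_norm_sub_sq_mul_smul a ht hu
    _ = (∫ t in Ioi 0, ∫ ξ, L ξ t : ℝ) := integral_complex_ofReal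
    _ = (∫ ξ, ∫ t in Ioi 0, L ξ t : ℝ) := by rw [integral_integral_swap hL]
    _ = (gammaR a * ∫ ξ, ‖ξ‖ ^ (-a) * ‖𝓕 u ξ‖ ^ 2 : ℝ) := by
        rw [← integral_const_mul]
        congr 1
        refine integral_congr_ae ?_
        filter_upwards [Measure.ae_ne volume 0] with ξ hξ
        rw [integral_mul_const, integral_rpow_mul_exp_neg_pi_mul_sq_div ha0 (norm_pos_iff.2 hξ),
          mul_assoc]

theorem integral_abs_sub_rpow_mul (ha0 : 0 < a) (ha1 : a < 1) {u : ℝ → ℝ} (hu : Integrable u)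
    (hE : Integrable fun p : ℝ × ℝ => |p.1 - p.2| ^ (a - 1) * (u p.1 * u p.2)) :
    ∫ p : ℝ × ℝ, |p.1 - p.2| ^ (a - 1) * (u p.1 * u p.2) =
      2 * Gamma a * cos (a / 2 * π) *
        ∫ ξ : ℝ, |2 * π * ξ| ^ (-a) * ‖𝓕 (fun x : ℝ => (u x : ℂ)) ξ‖ ^ 2 := by
  have hcast (p : ℝ × ℝ) : ‖p.1 - p.2‖ ^ (a - finrank ℝ ℝ) • ((u p.1 : ℂ) * conj (u p.2 : ℂ)) =
      (|p.1 - p.2| ^ (a - 1) * (u p.1 * u p.2) : ℝ) := by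
    rw [finrank_self, Nat.cast_one, Real.norm_eq_abs, Complex.conj_ofReal, Complex.real_smul]
    push_cast
    rfl
  have hscale (ξ : ℝ) : |2 * π * ξ| ^ (-a) = (2 * π) ^ (-a) * ‖ξ‖ ^ (-a) := by
    rw [abs_mul, abs_of_pos two_pi_pos, mul_rpow two_pi_pos.le (abs_nonneg ξ), Real.norm_eq_abs]
  have hΓ := (gammaR_pos (sub_pos.2 ha1)).ne'
  have hRiesz := gammaR_smul_integral_norm_sub_rpow_smul (V := ℝ) (u := fun x => (u x : ℂ)) ha0
    (by simpa using ha1) hu.ofReal (by simp only [hcast]; exact hE.ofReal)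
  simp only [hcast] at hRiesz
  rw [integral_complex_ofReal, Complex.real_smul, ← Complex.ofReal_mul, Complex.ofReal_inj,
    finrank_self, Nat.cast_one] at hRiesz
  simp only [hscale, mul_assoc ((2 * π) ^ (-a))]
  rw [integral_const_mul]
  have hratio := gammaR_div_gammaR_one_sub ha0
  rw [div_eq_iff hΓ] at hratio
  refine mul_left_cancel₀ hΓ ?_
  rw [hRiesz, hratio]
  ring

end RieszEnergy

theorem stmt17_general (μ : ℝ) (hμ0 : 0 < μ) (hμ : μ < 1 / 2) (u : ℝ → ℝ) (hu : Integrable u)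
    (hu2 : MemLp u 2) :
    ∫ x : ℝ, leftRLIntegral μ u x * rightRLIntegral μ u x =
      Real.cos (μ * Real.pi) *
        ∫ ξ : ℝ, |2 * Real.pi * ξ| ^ (-(2 * μ)) * ‖𝓕 (fun x : ℝ => (u x : ℂ)) ξ‖ ^ 2 := by
  have hE : Integrable fun p : ℝ × ℝ => |p.1 - p.2| ^ (2 * μ - 1) * (u p.1 * u p.2) := by
    simpa using integrable_norm_sub_rpow_smul (V := ℝ) (a := 2 * μ) (by linarith)
      (by rw [finrank_self]; push_cast; linarith) hu hu2 hu hu2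
  have hΓ := Gamma_pos_of_pos (mul_pos two_pos hμ0)
  calc ∫ x : ℝ, leftRLIntegral μ u x * rightRLIntegral μ u x
      = ∫ p : ℝ × ℝ, rlKernel (2 * μ) (p.2 - p.1) * (u p.1 * u p.2) := by
        rw [two_mul] at hE ⊢
        exact integral_leftRLIntegral_mul_rightRLIntegral hμ0 hμ0 hu.1 hu.1
          (integrable_rlKernel_sub_mul hu.1 hE)
    _ = (∫ p : ℝ × ℝ, |p.1 - p.2| ^ (2 * μ - 1) * (u p.1 * u p.2)) / (2 * Gamma (2 * μ)) :=
        integral_rlKernel_sub_mul hu.1 hE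
    _ = cos (μ * π) *
          ∫ ξ : ℝ, |2 * π * ξ| ^ (-(2 * μ)) * ‖𝓕 (fun x : ℝ => (u x : ℂ)) ξ‖ ^ 2 := by
        rw [integral_abs_sub_rpow_mul (by linarith) (by linarith) hu hE,
          mul_div_cancel_left₀ μ two_ne_zero]
        field_simp

theorem stmt17 (μ : ℝ) (hμ0 : 0 < μ) (hμ : μ < 1 / 2) (u : ℝ → ℝ)
    (hu : ContDiff ℝ (⊤ : ℕ∞) u) (hcs : HasCompactSupport u) :
    ∫ x : ℝ, leftRLIntegral μ u x * rightRLIntegral μ u x =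
      Real.cos (μ * Real.pi) *
        ∫ ξ : ℝ, |2 * Real.pi * ξ| ^ (-(2 * μ)) * ‖𝓕 (fun x : ℝ => (u x : ℂ)) ξ‖ ^ 2 :=
  stmt17_general μ hμ0 hμ u (hu.continuous.integrable_of_hasCompactSupport hcs)
    (hu.continuous.memLp_of_hasCompactSupport hcs)
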